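/- arXiv:2012.00325 — 5 statements merged into one kernel-verified Lean document; each statement's English description precedes it below -/
import Mathlib

section
/- Suppose φ satisfies the coupled electro-quasistatic step Gᵀ * M_σ * G *ᵥ φ = Gᵀ *ᵥ j + (1/Δt) • (Gᵀ * M_ε * G *ᵥ φ_prev) − (1/Δt) • (Gᵀ * M_κ *ᵥ (a_cur − a_prev)), and a_next satisfies the magneto-quasistatic step (Cᵀ * M_ν * C + (1/Δt) • M_κ) *ᵥ a_next = j + (1/Δt) • (M_κ *ᵥ a_prev) − M_σ * G *ᵥ φ + (1/Δt) • (M_ε * G *ᵥ φ_prev). Then the discrete divergence of the conduction term is preserved: Gᵀ * M_κ *ᵥ a_next = Gᵀ * M_κ *ᵥ a_cur. -/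
open Matrix

/-!
The divergence `Gᵀ` annihilates the curl-curl term of the magneto-quasistatic step, and the
electro-quasistatic step says that `j - M_σ G φ + (1/Δt) M_ε G φ_prev` has divergence
`(1/Δt) Gᵀ M_κ (a_cur - a_prev)`. In the divergence of the magneto-quasistatic step, `a_prev`
therefore cancels and `a_cur` takes its place.
-/

theorem transpose_mul_transpose_mul_eq_zero {R l m n o : Type*} [NonUnitalCommSemiring R]
    [Fintype m] [Fintype n] {C : Matrix m n R} {G : Matrix n o R} (hCG : C * G = 0)
    (N : Matrix m l R) : Gᵀ * (Cᵀ * N) = 0 := by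
  rw [← Matrix.mul_assoc, ← transpose_mul, hCG, transpose_zero, Matrix.zero_mul]

theorem mulVec_add_smul_mulVec_of_mul_eq_zero {R m n o : Type*} [CommSemiring R]
    [Fintype m] [Fintype n] {D : Matrix o m R} {K : Matrix m n R} (hDK : D * K = 0)
    (c : R) (M : Matrix m n R) (a : n → R) :
    D *ᵥ ((K + c • M) *ᵥ a) = c • ((D * M) *ᵥ a) := by
  rw [mulVec_mulVec, Matrix.mul_add, hDK, zero_add, Matrix.mul_smul, smul_mulVec]

theorem twoStepDarwin_div_preserved_general {𝕜 F E N : Type*} [Field 𝕜]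
    [Fintype F] [Fintype E] [Fintype N]
    {C : Matrix F E 𝕜} {G : Matrix E N 𝕜} (hCG : C * G = 0)
    {M_ν : Matrix F F 𝕜} {M_κ M_ε : Matrix E E 𝕜} {Δt : 𝕜} (hΔt : Δt ≠ 0)
    {j a_prev a_cur a_next : E → 𝕜} {φ φ_prev : N → 𝕜}
    (hφ : (Gᵀ * (M_κ + (1 / Δt) • M_ε) * G) *ᵥ φ =
        Gᵀ *ᵥ j + (1 / Δt) • ((Gᵀ * M_ε * G) *ᵥ φ_prev)
          - (1 / Δt) • ((Gᵀ * M_κ) *ᵥ (a_cur - a_prev)))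
    (ha : (Cᵀ * M_ν * C + (1 / Δt) • M_κ) *ᵥ a_next =
        j + (1 / Δt) • (M_κ *ᵥ a_prev) - ((M_κ + (1 / Δt) • M_ε) * G) *ᵥ φ
          + (1 / Δt) • ((M_ε * G) *ᵥ φ_prev)) :
    (Gᵀ * M_κ) *ᵥ a_next = (Gᵀ * M_κ) *ᵥ a_cur := by
  have div_curlCurl : Gᵀ * (Cᵀ * M_ν * C) = 0 := by
    rw [Matrix.mul_assoc Cᵀ, transpose_mul_transpose_mul_eq_zero hCG]
  refine smul_right_injective _ (one_div_ne_zero hΔt) ?_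
  calc (1 / Δt) • ((Gᵀ * M_κ) *ᵥ a_next)
      = Gᵀ *ᵥ ((Cᵀ * M_ν * C + (1 / Δt) • M_κ) *ᵥ a_next) :=
        (mulVec_add_smul_mulVec_of_mul_eq_zero div_curlCurl _ _ _).symm
    _ = Gᵀ *ᵥ j + (1 / Δt) • ((Gᵀ * M_κ) *ᵥ a_prev)
          - (Gᵀ * (M_κ + (1 / Δt) • M_ε) * G) *ᵥ φ
          + (1 / Δt) • ((Gᵀ * M_ε * G) *ᵥ φ_prev) := by
        rw [ha]
        simp only [mulVec_add, mulVec_sub, mulVec_smul, mulVec_mulVec, Matrix.mul_assoc]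
    _ = (1 / Δt) • ((Gᵀ * M_κ) *ᵥ a_prev + (Gᵀ * M_κ) *ᵥ (a_cur - a_prev)) := by
        rw [hφ, smul_add]
        abel
    _ = (1 / Δt) • ((Gᵀ * M_κ) *ᵥ a_cur) := by
        rw [← mulVec_add, add_sub_cancel]

/-- **Two-step Darwin scheme, divergence preservation (single iteration).**
If `φ` satisfies the coupled electro-quasistatic step and `a_next` satisfies the
magneto-quasistatic step, then the discrete divergence of the conduction term is
preserved: `Gᵀ * M_κ *ᵥ a_next = Gᵀ * M_κ *ᵥ a_cur`. -/
theorem twoStepDarwin_div_preserved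
    {n_f n_e n_n : ℕ}
    (C : Matrix (Fin n_f) (Fin n_e) ℝ) (G : Matrix (Fin n_e) (Fin n_n) ℝ)
    (hCG : C * G = 0)
    (M_ν : Matrix (Fin n_f) (Fin n_f) ℝ)
    (M_κ M_ε M_σ : Matrix (Fin n_e) (Fin n_e) ℝ)
    (Δt : ℝ) (hΔt : 0 < Δt)
    (hσ : M_σ = M_κ + (1 / Δt) • M_ε)
    (j a_prev a_cur a_next : Fin n_e → ℝ) (φ φ_prev : Fin n_n → ℝ)
    (hφ : (Gᵀ * M_σ * G) *ᵥ φ =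
        Gᵀ *ᵥ j + (1 / Δt) • ((Gᵀ * M_ε * G) *ᵥ φ_prev)
          - (1 / Δt) • ((Gᵀ * M_κ) *ᵥ (a_cur - a_prev)))
    (ha : (Cᵀ * M_ν * C + (1 / Δt) • M_κ) *ᵥ a_next =
        j + (1 / Δt) • (M_κ *ᵥ a_prev) - (M_σ * G) *ᵥ φ
          + (1 / Δt) • ((M_ε * G) *ᵥ φ_prev)) :
    (Gᵀ * M_κ) *ᵥ a_next = (Gᵀ * M_κ) *ᵥ a_cur := by
  subst hσ
  exact twoStepDarwin_div_preserved_general hCG hΔt.ne' hφ ha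
end

section
/- Let a : ℕ → (Fin n_e → ℝ) and φ : ℕ → (Fin n_n → ℝ) be sequences of iterates such that for every i : ℕ, φ i satisfies Gᵀ * M_σ * G *ᵥ (φ i) = Gᵀ *ᵥ j + (1/Δt) • (Gᵀ * M_ε * G *ᵥ φ_prev) − (1/Δt) • (Gᵀ * M_κ *ᵥ (a i − a_prev)), and a (i+1) satisfies (Cᵀ * M_ν * C + (1/Δt) • M_κ) *ᵥ a (i+1) = j + (1/Δt) • (M_κ *ᵥ a_prev) − M_σ * G *ᵥ (φ i) + (1/Δt) • (M_ε * G *ᵥ φ_prev). Then for every i : ℕ, Gᵀ * M_κ *ᵥ a i = Gᵀ * M_κ *ᵥ a 0; that is, every iterate maintains the discrete divergence of the initial guess a 0. -/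
open Matrix

/-!
Multiplying the equation for `a (i + 1)` by the discrete divergence `Gᵀ` annihilates the curl-curl
term, so its left-hand side becomes `(1 / Δt) • (Gᵀ * M_κ) *ᵥ a (i + 1)`. The potential equation for
`φ i` says precisely that the divergence of its right-hand side is `(1 / Δt) • (Gᵀ * M_κ) *ᵥ a i`.
-/

section CommSemiring

variable {R E F N X Y : Type*} [CommSemiring R] [Fintype E]

theorem transpose_mul_transpose_mul_eq_zero_s1 [Fintype F] {C : Matrix F E R} {G : Matrix E N R}
    (hCG : C * G = 0) (A : Matrix F X R) : Gᵀ * (Cᵀ * A) = 0 := by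
  rw [← Matrix.mul_assoc, ← transpose_mul, hCG, transpose_zero, Matrix.zero_mul]

theorem mulVec_add_smul_mulVec_of_mul_eq_zero_s1 [Fintype Y] {D : Matrix X E R} {K : Matrix E Y R}
    (hDK : D * K = 0) (M : Matrix E Y R) (s : R) (x : Y → R) :
    D *ᵥ ((K + s • M) *ᵥ x) = s • ((D * M) *ᵥ x) := by
  rw [mulVec_mulVec, Matrix.mul_add, hDK, zero_add, Matrix.mul_smul, smul_mulVec]

theorem mulVec_eq_of_add_smul_mulVec_eq [Fintype Y] {D : Matrix X E R} {K M : Matrix E Y R}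
    {s : R} (hs : IsSMulRegular R s) (hDK : D * K = 0) {x x' : Y → R} {b : E → R}
    (hx' : (K + s • M) *ᵥ x' = b) (hb : D *ᵥ b = s • ((D * M) *ᵥ x)) :
    (D * M) *ᵥ x' = (D * M) *ᵥ x := by
  have hs_pi : IsSMulRegular (X → R) s := IsSMulRegular.pi fun _ ↦ hs
  apply hs_pi
  calc s • ((D * M) *ᵥ x') = D *ᵥ ((K + s • M) *ᵥ x') :=
        (mulVec_add_smul_mulVec_of_mul_eq_zero_s1 hDK M s x').symm
    _ = s • ((D * M) *ᵥ x) := by rw [hx', hb]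

end CommSemiring

section CommRing

variable {R E F N X Y Z : Type*} [CommRing R] [Fintype E]

theorem mulVec_source_eq_of_potential_eq [Fintype N] [Fintype X] [Fintype Y]
    {D : Matrix Z E R} {A B : Matrix E X R} {G : Matrix X N R} {M : Matrix E Y R} {s : R}
    {j : E → R} {x x₀ : Y → R} {φ φ₀ : N → R}
    (hφ : (D * A * G) *ᵥ φ =
      D *ᵥ j + s • ((D * B * G) *ᵥ φ₀) - s • ((D * M) *ᵥ (x - x₀))) :
    D *ᵥ (j + s • (M *ᵥ x₀) - (A * G) *ᵥ φ + s • ((B * G) *ᵥ φ₀)) = s • ((D * M) *ᵥ x) := by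
  simp only [mulVec_add, mulVec_sub, mulVec_smul, mulVec_mulVec, ← Matrix.mul_assoc, hφ, smul_sub]
  abel

/-- The scalar `s` plays the role of `1 / Δt`. -/
theorem twoStepDarwin_iterates_div_preserved_general [Fintype F] [Fintype N]
    {C : Matrix F E R} {G : Matrix E N R} (hCG : C * G = 0)
    {M_ν : Matrix F F R} {M_κ M_ε : Matrix E E R} {s : R} (hs : IsSMulRegular R s)
    {j a_prev : E → R} {φ_prev : N → R} {a : ℕ → E → R} {φ : ℕ → N → R}
    (hφ : ∀ i, (Gᵀ * (M_κ + s • M_ε) * G) *ᵥ φ i =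
      Gᵀ *ᵥ j + s • ((Gᵀ * M_ε * G) *ᵥ φ_prev) - s • ((Gᵀ * M_κ) *ᵥ (a i - a_prev)))
    (ha : ∀ i, (Cᵀ * M_ν * C + s • M_κ) *ᵥ a (i + 1) =
      j + s • (M_κ *ᵥ a_prev) - ((M_κ + s • M_ε) * G) *ᵥ φ i + s • ((M_ε * G) *ᵥ φ_prev))
    (i : ℕ) : (Gᵀ * M_κ) *ᵥ a i = (Gᵀ * M_κ) *ᵥ a 0 := by
  have div_curl_curl : Gᵀ * (Cᵀ * M_ν * C) = 0 := by
    rw [Matrix.mul_assoc Cᵀ]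
    exact transpose_mul_transpose_mul_eq_zero_s1 hCG (M_ν * C)
  have div_step (i : ℕ) : (Gᵀ * M_κ) *ᵥ a (i + 1) = (Gᵀ * M_κ) *ᵥ a i :=
    mulVec_eq_of_add_smul_mulVec_eq hs div_curl_curl (ha i)
      (mulVec_source_eq_of_potential_eq (hφ i))
  induction i with
  | zero => rfl
  | succ i ih => exact (div_step i).trans ih

end CommRing

/-- **Two-step Darwin scheme, divergence preservation along the iteration.**
Every iterate `a i` of the coupled iterative process maintains the discrete
divergence of the initial guess `a 0`. -/
theorem twoStepDarwin_iterates_div_preserved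
    {n_f n_e n_n : ℕ}
    (C : Matrix (Fin n_f) (Fin n_e) ℝ) (G : Matrix (Fin n_e) (Fin n_n) ℝ)
    (hCG : C * G = 0)
    (M_ν : Matrix (Fin n_f) (Fin n_f) ℝ)
    (M_κ M_ε M_σ : Matrix (Fin n_e) (Fin n_e) ℝ)
    (Δt : ℝ) (hΔt : 0 < Δt)
    (hσ : M_σ = M_κ + (1 / Δt) • M_ε)
    (j a_prev : Fin n_e → ℝ) (φ_prev : Fin n_n → ℝ)
    (a : ℕ → (Fin n_e → ℝ)) (φ : ℕ → (Fin n_n → ℝ))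
    (hφ : ∀ i : ℕ, (Gᵀ * M_σ * G) *ᵥ (φ i) =
        Gᵀ *ᵥ j + (1 / Δt) • ((Gᵀ * M_ε * G) *ᵥ φ_prev)
          - (1 / Δt) • ((Gᵀ * M_κ) *ᵥ (a i - a_prev)))
    (ha : ∀ i : ℕ, (Cᵀ * M_ν * C + (1 / Δt) • M_κ) *ᵥ a (i + 1) =
        j + (1 / Δt) • (M_κ *ᵥ a_prev) - (M_σ * G) *ᵥ (φ i)
          + (1 / Δt) • ((M_ε * G) *ᵥ φ_prev)) :
    ∀ i : ℕ, (Gᵀ * M_κ) *ᵥ a i = (Gᵀ * M_κ) *ᵥ a 0 := by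
  subst hσ
  exact twoStepDarwin_iterates_div_preserved_general hCG
    (.of_ne_zero (one_div_pos.mpr hΔt).ne') hφ ha
end

section
/- Let a : ℕ → (Fin n_e → ℝ), φ : ℕ → (Fin n_n → ℝ), and j : ℕ → (Fin n_e → ℝ) be sequences over time steps such that for every n : ℕ the two-step scheme holds: first the decoupled electro-quasistatic equation Gᵀ * M_σ * G *ᵥ φ (n+1) = Gᵀ *ᵥ j (n+1) + (1/Δt) • (Gᵀ * M_ε * G *ᵥ φ n), and then the magneto-quasistatic equation (Cᵀ * M_ν * C + (1/Δt) • M_κ) *ᵥ a (n+1) = j (n+1) + (1/Δt) • (M_κ *ᵥ a n) − M_σ * G *ᵥ φ (n+1) + (1/Δt) • (M_ε * G *ᵥ φ n). Then for every n : ℕ, Gᵀ * M_κ *ᵥ a n = Gᵀ * M_κ *ᵥ a 0; i.e., the initialization vector a 0 of the time integration acts as an initial gauge that is maintained for all time steps. -/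
open Matrix

/-!
Left multiplication by `Gᵀ`, the discrete divergence, turns the magneto-quasistatic equation into
a statement about `Gᵀ * M_κ *ᵥ a` alone: the curl-curl term disappears because a curl has no
divergence, and the current terms disappear because the electro-quasistatic equation says exactly
that the total current is divergence-free. What remains is
`(1 / Δt) • (Gᵀ * M_κ *ᵥ a (n + 1)) = (1 / Δt) • (Gᵀ * M_κ *ᵥ a n)`.
-/

section

variable {R f e n : Type*} [CommRing R] [Fintype f] [Fintype e]

theorem transpose_mul_curlCurl_eq_zero {C : Matrix f e R} {G : Matrix e n R} (hCG : C * G = 0)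
    (N : Matrix f f R) : Gᵀ * (Cᵀ * N * C) = 0 := by
  have hGC : Gᵀ * Cᵀ = 0 := by rw [← transpose_mul, hCG, transpose_zero]
  rw [Matrix.mul_assoc, ← Matrix.mul_assoc, hGC, Matrix.zero_mul]

theorem mulVec_totalCurrent_eq_zero {m : Type*} [Fintype n] {D : Matrix m e R} {G : Matrix e n R}
    {S E : Matrix e e R} {τ : R} {j : e → R} {φ φ' : n → R}
    (h : (D * S * G) *ᵥ φ' = D *ᵥ j + τ • ((D * E * G) *ᵥ φ)) :
    D *ᵥ (j - (S * G) *ᵥ φ' + τ • ((E * G) *ᵥ φ)) = 0 := by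
  simp only [Matrix.mul_assoc] at h
  simp only [mulVec_add, mulVec_sub, mulVec_smul, mulVec_mulVec, h]
  abel

theorem mul_mulVec_eq_of_implicitStep {m : Type*} {D : Matrix m e R} {K M : Matrix e e R} {τ : R}
    {a a' b : e → R} (hτ : IsSMulRegular R τ) (hK : D * K = 0) (hb : D *ᵥ b = 0)
    (h : (K + τ • M) *ᵥ a' = b + τ • (M *ᵥ a)) :
    (D * M) *ᵥ a' = (D * M) *ᵥ a := by
  refine IsSMulRegular.pi (fun _ => hτ) ?_
  calc τ • ((D * M) *ᵥ a')
      = D *ᵥ ((K + τ • M) *ᵥ a') := by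
        rw [mulVec_mulVec, Matrix.mul_add, hK, zero_add, Matrix.mul_smul, smul_mulVec]
    _ = D *ᵥ (b + τ • (M *ᵥ a)) := by rw [h]
    _ = τ • ((D * M) *ᵥ a) := by rw [mulVec_add, hb, zero_add, mulVec_smul, mulVec_mulVec]

theorem twoStepDarwin_step_gauge [Fintype n] {C : Matrix f e R} {G : Matrix e n R}
    (hCG : C * G = 0) {N : Matrix f f R} {M S E : Matrix e e R} {τ : R} (hτ : IsSMulRegular R τ)
    {a a' j : e → R} {φ φ' : n → R}
    (hφ : (Gᵀ * S * G) *ᵥ φ' = Gᵀ *ᵥ j + τ • ((Gᵀ * E * G) *ᵥ φ))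
    (ha : (Cᵀ * N * C + τ • M) *ᵥ a' =
        j + τ • (M *ᵥ a) - (S * G) *ᵥ φ' + τ • ((E * G) *ᵥ φ)) :
    (Gᵀ * M) *ᵥ a' = (Gᵀ * M) *ᵥ a :=
  mul_mulVec_eq_of_implicitStep hτ (transpose_mul_curlCurl_eq_zero hCG N)
    (mulVec_totalCurrent_eq_zero hφ) (ha.trans (by abel))

end

-- Step-dependent `Δt` and `M_ν` allow adaptive time steps and a nonlinear reluctivity.
theorem twoStepDarwin_timeSteps_initial_gauge_general
    {𝕜 f e n : Type*} [Field 𝕜] [Fintype f] [Fintype e] [Fintype n]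
    {C : Matrix f e 𝕜} {G : Matrix e n 𝕜} (hCG : C * G = 0)
    {M_ν : ℕ → Matrix f f 𝕜} {M_κ M_ε : Matrix e e 𝕜} {Δt : ℕ → 𝕜} (hΔt : ∀ k, Δt k ≠ 0)
    {a : ℕ → e → 𝕜} {φ : ℕ → n → 𝕜} {j : ℕ → e → 𝕜}
    (hφ : ∀ k, (Gᵀ * (M_κ + (1 / Δt k) • M_ε) * G) *ᵥ φ (k + 1) =
        Gᵀ *ᵥ j (k + 1) + (1 / Δt k) • ((Gᵀ * M_ε * G) *ᵥ φ k))
    (ha : ∀ k, (Cᵀ * M_ν k * C + (1 / Δt k) • M_κ) *ᵥ a (k + 1) =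
        j (k + 1) + (1 / Δt k) • (M_κ *ᵥ a k)
          - ((M_κ + (1 / Δt k) • M_ε) * G) *ᵥ φ (k + 1)
          + (1 / Δt k) • ((M_ε * G) *ᵥ φ k))
    (k : ℕ) : (Gᵀ * M_κ) *ᵥ a k = (Gᵀ * M_κ) *ᵥ a 0 := by
  induction k with
  | zero => rfl
  | succ k ih =>
    have hτ : IsSMulRegular 𝕜 (1 / Δt k) :=
      (isUnit_iff_ne_zero.mpr (one_div_ne_zero (hΔt k))).isSMulRegular 𝕜
    exact (twoStepDarwin_step_gauge hCG hτ (hφ k) (ha k)).trans ih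

/-- **Two-step Darwin time-domain scheme: the initial gauge is maintained for all
time steps.** If the decoupled electro-quasistatic equation and the
magneto-quasistatic equation of the two-step scheme hold for every time step, then
`Gᵀ * M_κ *ᵥ a n = Gᵀ * M_κ *ᵥ a 0` for all `n`, i.e. the initialization vector
`a 0` acts as an initial gauge maintained throughout the time integration. -/
theorem twoStepDarwin_timeSteps_initial_gauge
    {n_f n_e n_n : ℕ}
    (C : Matrix (Fin n_f) (Fin n_e) ℝ) (G : Matrix (Fin n_e) (Fin n_n) ℝ)
    (hCG : C * G = 0)
    (M_ν : Matrix (Fin n_f) (Fin n_f) ℝ)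
    (M_κ M_ε M_σ : Matrix (Fin n_e) (Fin n_e) ℝ)
    (Δt : ℝ) (hΔt : 0 < Δt)
    (hσ : M_σ = M_κ + (1 / Δt) • M_ε)
    (a : ℕ → (Fin n_e → ℝ)) (φ : ℕ → (Fin n_n → ℝ)) (j : ℕ → (Fin n_e → ℝ))
    (hφ : ∀ n : ℕ, (Gᵀ * M_σ * G) *ᵥ φ (n + 1) =
        Gᵀ *ᵥ j (n + 1) + (1 / Δt) • ((Gᵀ * M_ε * G) *ᵥ φ n))
    (ha : ∀ n : ℕ, (Cᵀ * M_ν * C + (1 / Δt) • M_κ) *ᵥ a (n + 1) =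
        j (n + 1) + (1 / Δt) • (M_κ *ᵥ a n) - (M_σ * G) *ᵥ φ (n + 1)
          + (1 / Δt) • ((M_ε * G) *ᵥ φ n)) :
    ∀ n : ℕ, (Gᵀ * M_κ) *ᵥ a n = (Gᵀ * M_κ) *ᵥ a 0 := by
  subst hσ
  exact twoStepDarwin_timeSteps_initial_gauge_general hCG (fun _ => hΔt.ne') hφ ha
end

section
/- Let a : ℕ → (Fin n_e → ℝ) and φ : ℕ → (Fin n_n → ℝ) be sequences of iterates such that for every i : ℕ, φ i satisfies Gᵀ * M_σ * G *ᵥ (φ i) = Gᵀ *ᵥ j + (1/Δt) • (Gᵀ * M_ε * G *ᵥ φ_prev) − (1/Δt) • (Gᵀ * M_κ *ᵥ (a i − a_prev)), and a (i+1) satisfies (Cᵀ * M_ν * C + (1/Δt) • M_κ) *ᵥ a (i+1) = j + (1/Δt) • (M_κ *ᵥ a_prev) − M_σ * G *ᵥ (φ i) + (1/Δt) • (M_ε * G *ᵥ φ_prev). If the iterates a i converge, as i → ∞ and in the product topology on Fin n_e → ℝ, to a limit a⋆ : Fin n_e → ℝ, then the converged solution maintains the discrete divergence of the initial guess: Gᵀ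 * M_κ *ᵥ a⋆ = Gᵀ * M_κ *ᵥ a 0. -/
open Matrix

/-!
The first half-step makes the discrete divergence of the driving current balance that of the
inductive term of the *old* iterate `a i`, while the second half-step balances the same current
against the curl-curl and inductive terms of the *new* iterate `a (i + 1)`. Taking the divergence
of the latter kills the curl-curl term, so `Gᵀ M_κ a` is an invariant of the iteration; its level
sets are closed, and so contain every limit of iterates.
-/

namespace TwoStepDarwin

lemma mulVec_eq_of_mem_closure_range {R m n ι : Type*} [NonUnitalNonAssocSemiring R]
    [TopologicalSpace R] [IsTopologicalSemiring R] [T2Space R] [Fintype m]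
    {A : Matrix n m R} {b : n → R} {u : ι → m → R} (hu : ∀ i, A *ᵥ u i = b)
    {v : m → R} (hv : v ∈ closure (Set.range u)) : A *ᵥ v = b :=
  Set.EqOn.closure (f := (A *ᵥ ·)) (g := fun _ ↦ b) (Set.forall_mem_range.2 hu)
    (continuous_const.matrix_mulVec continuous_id) continuous_const hv

variable {R f e n m : Type*} [CommRing R] [Fintype f] [Fintype e]

lemma transpose_mul_curlCurl_eq_zero {C : Matrix f e R} {G : Matrix e n R} (hCG : C * G = 0)
    (M_ν : Matrix f f R) : Gᵀ * (Cᵀ * M_ν * C) = 0 := by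
  rw [Matrix.mul_assoc, ← Matrix.mul_assoc, ← transpose_mul, hCG, transpose_zero,
    Matrix.zero_mul]

lemma mul_mulVec_eq_of_balance [Fintype m] {D : Matrix n e R} {N K : Matrix e m R} (hDN : D * N = 0)
    {τ : R} (hτ : IsSMulRegular R τ) {s : e → R} {p x y : m → R}
    (hx : D *ᵥ s = τ • ((D * K) *ᵥ (x - p))) (hy : N *ᵥ y + τ • (K *ᵥ (y - p)) = s) :
    (D * K) *ᵥ y = (D * K) *ᵥ x := by
  have hyx : τ • ((D * K) *ᵥ (y - p)) = τ • ((D * K) *ᵥ (x - p)) := by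
    calc τ • ((D * K) *ᵥ (y - p))
        = D *ᵥ (N *ᵥ y + τ • (K *ᵥ (y - p))) := by
          rw [mulVec_add, mulVec_mulVec, hDN, zero_mulVec, zero_add, mulVec_smul, mulVec_mulVec]
      _ = τ • ((D * K) *ᵥ (x - p)) := by rw [hy, hx]
  have hcancel : (D * K) *ᵥ (y - p) = (D * K) *ᵥ (x - p) := IsSMulRegular.pi (fun _ ↦ hτ) hyx
  rwa [mulVec_sub, mulVec_sub, sub_left_inj] at hcancel

variable [Fintype n]

/-- The current driving the curl-curl half-step of the Darwin scheme at the scalar potential `φ`: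
the impressed current `j`, minus the current `M_σ G φ` of `φ`, plus the displacement current
carried over from the previous time step. The scalar `τ` is the inverse time step. -/
def drivingCurrent (G : Matrix e n R) (M_σ M_ε : Matrix e e R) (τ : R)
    (j : e → R) (φ_prev φ : n → R) : e → R :=
  j + τ • ((M_ε * G) *ᵥ φ_prev) - (M_σ * G) *ᵥ φ

section HalfSteps

variable {G : Matrix e n R} {M_σ M_κ M_ε : Matrix e e R} {τ : R} {j a_prev : e → R}
  {φ_prev φ : n → R}

lemma transpose_mulVec_drivingCurrent {x : e → R}
    (hφ : (Gᵀ * M_σ * G) *ᵥ φ = Gᵀ *ᵥ j + τ • ((Gᵀ * M_ε * G) *ᵥ φ_prev)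
      - τ • ((Gᵀ * M_κ) *ᵥ (x - a_prev))) :
    Gᵀ *ᵥ drivingCurrent G M_σ M_ε τ j φ_prev φ = τ • ((Gᵀ * M_κ) *ᵥ (x - a_prev)) := by
  simp only [drivingCurrent, mulVec_add, mulVec_sub, mulVec_smul, mulVec_mulVec,
    ← Matrix.mul_assoc, hφ, sub_sub_cancel]

lemma mulVec_add_smul_mulVec_sub_eq_drivingCurrent {N : Matrix e e R} {y : e → R}
    (ha : (N + τ • M_κ) *ᵥ y = j + τ • (M_κ *ᵥ a_prev) - (M_σ * G) *ᵥ φ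
      + τ • ((M_ε * G) *ᵥ φ_prev)) :
    N *ᵥ y + τ • (M_κ *ᵥ (y - a_prev)) = drivingCurrent G M_σ M_ε τ j φ_prev φ := by
  calc N *ᵥ y + τ • (M_κ *ᵥ (y - a_prev))
      = (N + τ • M_κ) *ᵥ y - τ • (M_κ *ᵥ a_prev) := by
        rw [mulVec_sub, smul_sub, add_mulVec, smul_mulVec, add_sub_assoc]
    _ = drivingCurrent G M_σ M_ε τ j φ_prev φ := by
        rw [ha, drivingCurrent]
        abel

end HalfSteps

lemma div_iterate_eq_div_init {C : Matrix f e R} {G : Matrix e n R} (hCG : C * G = 0)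
    {M_ν : Matrix f f R} {M_κ M_ε M_σ : Matrix e e R} {τ : R} (hτ : IsSMulRegular R τ)
    {j a_prev : e → R} {φ_prev : n → R} {a : ℕ → e → R} {φ : ℕ → n → R}
    (hφ : ∀ i, (Gᵀ * M_σ * G) *ᵥ φ i = Gᵀ *ᵥ j + τ • ((Gᵀ * M_ε * G) *ᵥ φ_prev)
      - τ • ((Gᵀ * M_κ) *ᵥ (a i - a_prev)))
    (ha : ∀ i, (Cᵀ * M_ν * C + τ • M_κ) *ᵥ a (i + 1) =
      j + τ • (M_κ *ᵥ a_prev) - (M_σ * G) *ᵥ φ i + τ • ((M_ε * G) *ᵥ φ_prev)) (i : ℕ) :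
    (Gᵀ * M_κ) *ᵥ a i = (Gᵀ * M_κ) *ᵥ a 0 := by
  induction i with
  | zero => rfl
  | succ i ih =>
    exact (mul_mulVec_eq_of_balance (transpose_mul_curlCurl_eq_zero hCG M_ν) hτ
      (transpose_mulVec_drivingCurrent (hφ i))
      (mulVec_add_smul_mulVec_sub_eq_drivingCurrent (ha i))).trans ih

end TwoStepDarwin

theorem twoStepDarwin_limit_div_preserved_general
    {𝕜 f e n : Type*} [Field 𝕜] [TopologicalSpace 𝕜] [IsTopologicalSemiring 𝕜] [T2Space 𝕜]
    [Fintype f] [Fintype e] [Fintype n]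
    (C : Matrix f e 𝕜) (G : Matrix e n 𝕜) (hCG : C * G = 0) (M_ν : Matrix f f 𝕜)
    (M_κ M_ε M_σ : Matrix e e 𝕜) (Δt : 𝕜) (hΔt : Δt ≠ 0)
    (hσ : M_σ = M_κ + (1 / Δt) • M_ε)
    (j a_prev : e → 𝕜) (φ_prev : n → 𝕜) (a : ℕ → e → 𝕜) (φ : ℕ → n → 𝕜)
    (hφ : ∀ i, (Gᵀ * M_σ * G) *ᵥ φ i =
      Gᵀ *ᵥ j + (1 / Δt) • ((Gᵀ * M_ε * G) *ᵥ φ_prev)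
        - (1 / Δt) • ((Gᵀ * M_κ) *ᵥ (a i - a_prev)))
    (ha : ∀ i, (Cᵀ * M_ν * C + (1 / Δt) • M_κ) *ᵥ a (i + 1) =
      j + (1 / Δt) • (M_κ *ᵥ a_prev) - (M_σ * G) *ᵥ φ i
        + (1 / Δt) • ((M_ε * G) *ᵥ φ_prev))
    (a_star : e → 𝕜) (ha_star : a_star ∈ closure (Set.range a)) :
    (Gᵀ * M_κ) *ᵥ a_star = (Gᵀ * M_κ) *ᵥ a 0 :=
  have hτ : IsSMulRegular 𝕜 (1 / Δt) := .of_ne_zero (one_div_ne_zero hΔt)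
  TwoStepDarwin.mulVec_eq_of_mem_closure_range
    (TwoStepDarwin.div_iterate_eq_div_init hCG hτ hφ ha) ha_star

/-- **Two-step Darwin scheme: the converged solution maintains the discrete
divergence of the initial guess.** If the iterates `a i` of the coupled iterative
process converge (in the product topology) to a limit `a⋆`, then
`Gᵀ * M_κ *ᵥ a⋆ = Gᵀ * M_κ *ᵥ a 0`. -/
theorem twoStepDarwin_limit_div_preserved
    {n_f n_e n_n : ℕ}
    (C : Matrix (Fin n_f) (Fin n_e) ℝ) (G : Matrix (Fin n_e) (Fin n_n) ℝ)
    (hCG : C * G = 0)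
    (M_ν : Matrix (Fin n_f) (Fin n_f) ℝ)
    (M_κ M_ε M_σ : Matrix (Fin n_e) (Fin n_e) ℝ)
    (Δt : ℝ) (hΔt : 0 < Δt)
    (hσ : M_σ = M_κ + (1 / Δt) • M_ε)
    (j a_prev : Fin n_e → ℝ) (φ_prev : Fin n_n → ℝ)
    (a : ℕ → (Fin n_e → ℝ)) (φ : ℕ → (Fin n_n → ℝ))
    (hφ : ∀ i : ℕ, (Gᵀ * M_σ * G) *ᵥ (φ i) =
        Gᵀ *ᵥ j + (1 / Δt) • ((Gᵀ * M_ε * G) *ᵥ φ_prev)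
          - (1 / Δt) • ((Gᵀ * M_κ) *ᵥ (a i - a_prev)))
    (ha : ∀ i : ℕ, (Cᵀ * M_ν * C + (1 / Δt) • M_κ) *ᵥ a (i + 1) =
        j + (1 / Δt) • (M_κ *ᵥ a_prev) - (M_σ * G) *ᵥ (φ i)
          + (1 / Δt) • ((M_ε * G) *ᵥ φ_prev))
    (a_star : Fin n_e → ℝ)
    (hlim : Filter.Tendsto a Filter.atTop (nhds a_star)) :
    (Gᵀ * M_κ) *ᵥ a_star = (Gᵀ * M_κ) *ᵥ a 0 :=
  twoStepDarwin_limit_div_preserved_general C G hCG M_ν M_κ M_ε M_σ Δt hΔt.ne' hσ j a_prev φ_prev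
    a φ hφ ha a_star (mem_closure_of_tendsto hlim (.of_forall Set.mem_range_self))
end

section
/- Suppose φ_next solves the decoupled electro-quasistatic equation Gᵀ * M_σ * G *ᵥ φ_next = Gᵀ *ᵥ j + (1/Δt) • (Gᵀ * M_ε * G *ᵥ φ_prev), and a_next solves the magneto-quasistatic equation (Cᵀ * M_ν * C + (1/Δt) • M_κ) *ᵥ a_next = j + (1/Δt) • (M_κ *ᵥ a_prev) − M_σ * G *ᵥ φ_next + (1/Δt) • (M_ε * G *ᵥ φ_prev). Then Gᵀ * M_κ *ᵥ (a_next − a_prev) = 0, and consequently the pair (φ_next, a_next) also solves the fully coupled system: Gᵀ * M_σ * G *ᵥ φ_next = Gᵀ *ᵥ j + (1/Δt) • (Gᵀ * M_ε * G *ᵥ φ_prev) − (1/Δt) • (Gᵀ * M_κ *ᵥ (a_next − a_prev)). In other words, the solution of the decoupled two-step Darwin scheme is a solution of the coupled implicit-Euler Darwin system. -/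
open Matrix

/-!
The coupled electric equation is the discrete divergence `Gᵀ` of the magnetic equation: the
curl-curl term drops out because `Gᵀ * Cᵀ = 0`. So it holds for every solution of the magnetic
equation, and comparing it with the decoupled electric equation leaves only
`(1 / Δt) • (Gᵀ * M_κ) *ᵥ (a_next - a_prev) = 0`.
-/

namespace TwoStepDarwin

variable {R : Type*} [CommRing R]

theorem smul_mulVec_sub_eq_of_implicitEuler {l m n p : Type*} [Fintype l] [Fintype m] [Fintype n]
    {D : Matrix p m R} {B : Matrix m l R} (hDB : D * B = 0)
    {N : Matrix l n R} {K : Matrix m n R} {τ : R} {u_prev u_next : n → R} {f : m → R}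
    (hu : (B * N + τ • K) *ᵥ u_next = f + τ • (K *ᵥ u_prev)) :
    τ • ((D * K) *ᵥ (u_next - u_prev)) = D *ᵥ f := by
  have hD : D * (B * N + τ • K) = τ • (D * K) := by
    rw [Matrix.mul_add, ← Matrix.mul_assoc, hDB, Matrix.zero_mul, zero_add, Matrix.mul_smul]
  have hDu : τ • ((D * K) *ᵥ u_next) = D *ᵥ f + τ • ((D * K) *ᵥ u_prev) := by
    calc
      τ • ((D * K) *ᵥ u_next) = D *ᵥ ((B * N + τ • K) *ᵥ u_next) := by
        rw [mulVec_mulVec, hD, smul_mulVec]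
      _ = D *ᵥ f + τ • ((D * K) *ᵥ u_prev) := by
        rw [hu, mulVec_add, mulVec_smul, mulVec_mulVec]
  rw [mulVec_sub, smul_sub, hDu, add_sub_cancel_right]

theorem coupled_electric_of_magnetic {ι_f ι_e ι_n : Type*}
    [Fintype ι_f] [Fintype ι_e] [Fintype ι_n]
    {C : Matrix ι_f ι_e R} {G : Matrix ι_e ι_n R} (hCG : C * G = 0)
    {M_ν : Matrix ι_f ι_f R} {M_κ M_ε M_σ : Matrix ι_e ι_e R} {τ : R}
    {j a_prev a_next : ι_e → R} {φ_next φ_prev : ι_n → R}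
    (ha : (Cᵀ * M_ν * C + τ • M_κ) *ᵥ a_next =
        j + τ • (M_κ *ᵥ a_prev) - (M_σ * G) *ᵥ φ_next + τ • ((M_ε * G) *ᵥ φ_prev)) :
    (Gᵀ * M_σ * G) *ᵥ φ_next =
      Gᵀ *ᵥ j + τ • ((Gᵀ * M_ε * G) *ᵥ φ_prev)
        - τ • ((Gᵀ * M_κ) *ᵥ (a_next - a_prev)) := by
  have hGC : Gᵀ * Cᵀ = 0 := by rw [← transpose_mul, hCG, transpose_zero]
  have ha' : (Cᵀ * (M_ν * C) + τ • M_κ) *ᵥ a_next =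
      (j - (M_σ * G) *ᵥ φ_next + τ • ((M_ε * G) *ᵥ φ_prev)) + τ • (M_κ *ᵥ a_prev) := by
    rw [← Matrix.mul_assoc, ha]
    abel
  have hdiv := smul_mulVec_sub_eq_of_implicitEuler hGC ha'
  rw [hdiv, mulVec_add, mulVec_sub, mulVec_smul, mulVec_mulVec, mulVec_mulVec,
    ← Matrix.mul_assoc, ← Matrix.mul_assoc]
  abel

end TwoStepDarwin

theorem twoStepDarwin_solves_coupled_general {𝕜 ι_f ι_e ι_n : Type*} [Field 𝕜]
    [Fintype ι_f] [Fintype ι_e] [Fintype ι_n]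
    (C : Matrix ι_f ι_e 𝕜) (G : Matrix ι_e ι_n 𝕜) (hCG : C * G = 0)
    (M_ν : Matrix ι_f ι_f 𝕜) (M_κ M_ε : Matrix ι_e ι_e 𝕜) {Δt : 𝕜} (hΔt : Δt ≠ 0)
    {j a_prev a_next : ι_e → 𝕜} {φ_next φ_prev : ι_n → 𝕜}
    (hφ : (Gᵀ * (M_κ + (1 / Δt) • M_ε) * G) *ᵥ φ_next =
        Gᵀ *ᵥ j + (1 / Δt) • ((Gᵀ * M_ε * G) *ᵥ φ_prev))
    (ha : (Cᵀ * M_ν * C + (1 / Δt) • M_κ) *ᵥ a_next =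
        j + (1 / Δt) • (M_κ *ᵥ a_prev) - ((M_κ + (1 / Δt) • M_ε) * G) *ᵥ φ_next
          + (1 / Δt) • ((M_ε * G) *ᵥ φ_prev)) :
    (Gᵀ * M_κ) *ᵥ (a_next - a_prev) = 0 ∧
      (Gᵀ * (M_κ + (1 / Δt) • M_ε) * G) *ᵥ φ_next =
        Gᵀ *ᵥ j + (1 / Δt) • ((Gᵀ * M_ε * G) *ᵥ φ_prev)
          - (1 / Δt) • ((Gᵀ * M_κ) *ᵥ (a_next - a_prev)) := by
  have hcoupled := TwoStepDarwin.coupled_electric_of_magnetic hCG ha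
  have hsmul : (1 / Δt) • ((Gᵀ * M_κ) *ᵥ (a_next - a_prev)) = 0 :=
    sub_eq_self.mp (hcoupled.symm.trans hφ)
  exact ⟨(smul_eq_zero_iff_right (one_div_ne_zero hΔt)).mp hsmul, hcoupled⟩

/-- **The solution of the decoupled two-step Darwin scheme solves the coupled
implicit-Euler Darwin system.** If `φ_next` solves the decoupled electro-quasistatic
equation and `a_next` solves the magneto-quasistatic equation, then
`Gᵀ * M_κ *ᵥ (a_next − a_prev) = 0` and the pair `(φ_next, a_next)` also solves the
fully coupled system. -/
theorem twoStepDarwin_solves_coupled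
    {n_f n_e n_n : ℕ}
    (C : Matrix (Fin n_f) (Fin n_e) ℝ) (G : Matrix (Fin n_e) (Fin n_n) ℝ)
    (hCG : C * G = 0)
    (M_ν : Matrix (Fin n_f) (Fin n_f) ℝ)
    (M_κ M_ε M_σ : Matrix (Fin n_e) (Fin n_e) ℝ)
    (Δt : ℝ) (hΔt : 0 < Δt)
    (hσ : M_σ = M_κ + (1 / Δt) • M_ε)
    (j a_prev a_next : Fin n_e → ℝ) (φ_next φ_prev : Fin n_n → ℝ)
    (hφ : (Gᵀ * M_σ * G) *ᵥ φ_next =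
        Gᵀ *ᵥ j + (1 / Δt) • ((Gᵀ * M_ε * G) *ᵥ φ_prev))
    (ha : (Cᵀ * M_ν * C + (1 / Δt) • M_κ) *ᵥ a_next =
        j + (1 / Δt) • (M_κ *ᵥ a_prev) - (M_σ * G) *ᵥ φ_next
          + (1 / Δt) • ((M_ε * G) *ᵥ φ_prev)) :
    (Gᵀ * M_κ) *ᵥ (a_next - a_prev) = 0 ∧
      (Gᵀ * M_σ * G) *ᵥ φ_next =
        Gᵀ *ᵥ j + (1 / Δt) • ((Gᵀ * M_ε * G) *ᵥ φ_prev)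
          - (1 / Δt) • ((Gᵀ * M_κ) *ᵥ (a_next - a_prev)) := by
  subst hσ
  exact twoStepDarwin_solves_coupled_general C G hCG M_ν M_κ M_ε hΔt.ne' hφ ha
end
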